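/- Let n be a positive integer with n ≡ 0 (mod 4), let τ, A, A_C be integers, and set Q = ((-1)^{n/4}·B_{n/2} − B_{n/4})/(B_{n/2}·B_{n/4}) ∈ ℚ. If the equation A_C = 2n·(1 + 1/B_{n/2} + ((2^{n-1}−1)/(2^{n/2}−1)^2)·Q)·A + (1/(2^{n/2}−1)^2)·Q·(n·τ/2^n) holds in ℚ, then the rational number Q·(n·τ/2^n) is a 2-adic integer, i.e., its denominator in lowest terms is odd. -/

import Mathlib

/-- The topologists' Bernoulli number `B_k`: the absolute value of the `(2k)`-th
Bernoulli number, so `topB 1 = 1/6`, `topB 2 = 1/30`, etc. -/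
def topB (k : ℕ) : ℚ := |bernoulli (2 * k)|

/-!
By von Staudt–Clausen, `B_{2k} + 1/2` is integral at `2` for `k > 0`, so `1/B_{2k}` is a
2-adic integer. Hence so is `Q = (-1)^(n/4) / B_{n/4} - 1 / B_{n/2}`, and since `2^(n/2) - 1` is a
2-adic unit, the equation can be solved for `Q (n τ / 2^n)` in 2-adic integers.
-/

/-- The rational numbers that are integral at `p`, i.e. the localization of `ℤ` at `p`, encoded as
the valuation ring of the `p`-adic valuation on `ℚ`. -/
def padicIntegralRat (p : ℕ) [Fact p.Prime] : ValuationSubring ℚ :=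
  (Rat.padicValuation p).valuationSubring

namespace padicIntegralRat

variable {p : ℕ} [Fact p.Prime]

lemma mem_iff {x : ℚ} : x ∈ padicIntegralRat p ↔ ¬ p ∣ x.den :=
  Rat.padicValuation_le_one_iff

lemma mem_two_iff_odd_den {x : ℚ} : x ∈ padicIntegralRat 2 ↔ Odd x.den := by
  rw [mem_iff, ← even_iff_two_dvd, Nat.not_even_iff_odd]

lemma inv_intCast_mem {d : ℤ} (hd : ¬ (p : ℤ) ∣ d) : (d : ℚ)⁻¹ ∈ padicIntegralRat p := by
  have hval : Rat.padicValuation p d = 1 := by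
    rwa [Rat.padicValuation_cast, Int.padicValuation_eq_one_iff]
  rw [padicIntegralRat, Valuation.mem_valuationSubring_iff, map_inv₀, hval, inv_one]

variable (p) in
lemma inv_self_notMem : (p : ℚ)⁻¹ ∉ padicIntegralRat p := by
  have hp : p ≠ 0 := (Fact.out : p.Prime).ne_zero
  simp [mem_iff, hp]

lemma bernoulli_add_inv_mem {k : ℕ} (hk : 0 < k) (hpk : p - 1 ∣ 2 * k) :
    bernoulli (2 * k) + (p : ℚ)⁻¹ ∈ padicIntegralRat p := by
  have hp : p.Prime := Fact.out
  obtain ⟨z, hz⟩ := Bernoulli.vonStaudt_clausen k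
  have hp_mem : p ∈ (Finset.range (2 * k + 2)).filter fun q ↦ q.Prime ∧ q - 1 ∣ 2 * k := by
    have := Nat.le_of_dvd (by lia) hpk
    exact Finset.mem_filter.mpr ⟨Finset.mem_range.mpr (by lia), hp, hpk⟩
  rw [← Finset.add_sum_erase _ _ hp_mem, ← add_assoc, one_div] at hz
  rw [← sub_eq_of_eq_add hz]
  refine sub_mem (intCast_mem _ z) (sum_mem fun q hq ↦ ?_)
  obtain ⟨hqp, -, hq, -⟩ : q ≠ p ∧ q ∈ Finset.range (2 * k + 2) ∧ q.Prime ∧ q - 1 ∣ 2 * k := by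
    simpa only [Finset.mem_erase, Finset.mem_filter] using hq
  have hpq : ¬ (p : ℤ) ∣ q := by
    rw [Int.natCast_dvd_natCast, Nat.prime_dvd_prime_iff_eq hp hq]
    exact hqp.symm
  simpa only [one_div, Int.cast_natCast] using inv_intCast_mem hpq

lemma bernoulli_notMem {k : ℕ} (hk : 0 < k) (hpk : p - 1 ∣ 2 * k) :
    bernoulli (2 * k) ∉ padicIntegralRat p := fun hB ↦
  inv_self_notMem p <| by simpa using sub_mem (bernoulli_add_inv_mem hk hpk) hB

lemma inv_bernoulli_mem {k : ℕ} (hpk : p - 1 ∣ 2 * k) :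
    (bernoulli (2 * k))⁻¹ ∈ padicIntegralRat p := by
  obtain rfl | hk := k.eq_zero_or_pos
  · simp
  · exact ((padicIntegralRat p).mem_or_inv_mem _).resolve_left (bernoulli_notMem hk hpk)

lemma inv_topB_mem {k : ℕ} (hpk : p - 1 ∣ 2 * k) : (topB k)⁻¹ ∈ padicIntegralRat p := by
  rw [topB, ← abs_inv]
  obtain h | h := abs_choice (bernoulli (2 * k))⁻¹ <;> rw [h]
  · exact inv_bernoulli_mem hpk
  · exact neg_mem (inv_bernoulli_mem hpk)

lemma inv_two_pow_sub_one_mem {m : ℕ} (hm : m ≠ 0) :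
    ((2 : ℚ) ^ m - 1)⁻¹ ∈ padicIntegralRat 2 := by
  have hodd : Odd ((2 : ℤ) ^ m - 1) := (even_two.pow_of_ne_zero hm).sub_odd odd_one
  have hndvd : ¬ ((2 : ℕ) : ℤ) ∣ 2 ^ m - 1 := by
    rwa [Nat.cast_ofNat, ← even_iff_two_dvd, Int.not_even_iff_odd]
  exact_mod_cast inv_intCast_mem hndvd

end padicIntegralRat

lemma bernoulli_two_mul_ne_zero (k : ℕ) : bernoulli (2 * k) ≠ 0 := by
  obtain rfl | hk := k.eq_zero_or_pos
  · simp
  · intro hB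
    exact padicIntegralRat.bernoulli_notMem (p := 2) hk (one_dvd _) (hB ▸ zero_mem _)

lemma topB_ne_zero (k : ℕ) : topB k ≠ 0 :=
  abs_ne_zero.mpr (bernoulli_two_mul_ne_zero k)

lemma topB_quotient_mem_padicIntegralRat {p : ℕ} [Fact p.Prime] {j k : ℕ}
    (hpj : p - 1 ∣ 2 * j) (hpk : p - 1 ∣ 2 * k) {u : ℚ} (hu : u ∈ padicIntegralRat p) :
    (u * topB j - topB k) / (topB j * topB k) ∈ padicIntegralRat p := by
  have hj := topB_ne_zero j
  have hk := topB_ne_zero k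
  have hsplit : (u * topB j - topB k) / (topB j * topB k) = u * (topB k)⁻¹ - (topB j)⁻¹ := by
    field_simp
  rw [hsplit]
  exact sub_mem (mul_mem hu (padicIntegralRat.inv_topB_mem hpk))
    (padicIntegralRat.inv_topB_mem hpj)

theorem two_adic_integer_of_eq_general {m : ℕ} (hm : m ≠ 0) (n e j k : ℕ) {τ A A_C Q : ℚ}
    (hA : A ∈ padicIntegralRat 2) (hA_C : A_C ∈ padicIntegralRat 2)
    (hQ : Q = ((-1) ^ e * topB j - topB k) / (topB j * topB k))
    (heq : A_C =
      2 * n * (1 + 1 / topB j + ((2 ^ (n - 1) - 1) / (2 ^ m - 1) ^ 2) * Q) * A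
        + (1 / (2 ^ m - 1) ^ 2) * Q * (n * τ / 2 ^ n)) :
    Q * (n * τ / 2 ^ n) ∈ padicIntegralRat 2 := by
  set d : ℚ := 2 ^ m - 1
  set c : ℚ := 2 * n * (1 + 1 / topB j + ((2 ^ (n - 1) - 1) / d ^ 2) * Q)
  have two_pow_sub_one_mem (l : ℕ) : (2 : ℚ) ^ l - 1 ∈ padicIntegralRat 2 :=
    sub_mem (pow_mem (ofNat_mem _ 2) l) (one_mem _)
  have hd_inv : d⁻¹ ∈ padicIntegralRat 2 := padicIntegralRat.inv_two_pow_sub_one_mem hm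
  have hd_ne : d ≠ 0 := sub_ne_zero.mpr (one_lt_pow₀ one_lt_two hm).ne'
  have hQ_mem : Q ∈ padicIntegralRat 2 :=
    hQ ▸ topB_quotient_mem_padicIntegralRat (one_dvd _) (one_dvd _)
      (pow_mem (neg_mem (one_mem _)) e)
  have hB_mem : 1 / topB j ∈ padicIntegralRat 2 :=
    one_div (topB j) ▸ padicIntegralRat.inv_topB_mem (one_dvd _)
  have hcoeff : (2 ^ (n - 1) - 1) / d ^ 2 ∈ padicIntegralRat 2 := by
    rw [div_eq_mul_inv, ← inv_pow]
    exact mul_mem (two_pow_sub_one_mem _) (pow_mem hd_inv 2)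
  have hc : c ∈ padicIntegralRat 2 :=
    mul_mem (mul_mem (ofNat_mem _ 2) (natCast_mem _ n))
      (add_mem (add_mem (one_mem _) hB_mem) (mul_mem hcoeff hQ_mem))
  have hsolve : Q * (n * τ / 2 ^ n) = d ^ 2 * (A_C - c * A) := by
    rw [heq, add_sub_cancel_left]
    field_simp
  rw [hsolve]
  exact mul_mem (pow_mem (two_pow_sub_one_mem m) 2) (sub_mem hA_C (mul_mem hc hA))

/-- Let `n ≡ 0 (mod 4)` be positive and `τ, A, A_C` integers.  Set
`Q = ((-1)^(n/4) B_{n/2} - B_{n/4}) / (B_{n/2} B_{n/4})`.  If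
`A_C = 2n (1 + 1/B_{n/2} + ((2^(n-1)-1)/(2^(n/2)-1)^2) Q) A
      + (1/(2^(n/2)-1)^2) Q (n τ / 2^n)`
holds in `ℚ`, then `Q * (n τ / 2^n)` is a 2-adic integer, i.e. its denominator in
lowest terms is odd. -/
theorem two_adic_integer_of_eq (n : ℕ) (hn : 0 < n) (h4 : n % 4 = 0)
    (τ A A_C : ℤ)
    (Q : ℚ)
    (hQ : Q = ((-1 : ℚ) ^ (n / 4) * topB (n / 2) - topB (n / 4)) /
      (topB (n / 2) * topB (n / 4)))
    (heq : (A_C : ℚ) =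
      2 * n * (1 + 1 / topB (n / 2)
          + ((2 ^ (n - 1) - 1) / (2 ^ (n / 2) - 1) ^ 2) * Q) * A
        + (1 / (2 ^ (n / 2) - 1) ^ 2) * Q * (n * τ / 2 ^ n)) :
    Odd (Q * (n * τ / 2 ^ n)).den := by
  exact padicIntegralRat.mem_two_iff_odd_den.mp <|
    two_adic_integer_of_eq_general (by lia) n (n / 4) (n / 2) (n / 4)
      (intCast_mem _ A) (intCast_mem _ A_C) hQ heq
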